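/- arXiv:0812.2605 — 13 statements merged into one kernel-verified Lean document; each statement's English description precedes it below -/
import Mathlib

section
/- For all X, Y, Z, W ∈ V orthogonal to ξ, one has Rᵢ(φX,φY,φZ,φW) = Rᵢ(X,Y,Z,W) for i = 1, 2, 3, 6 (where Rᵢ(X,Y,Z,W) = ⟨Rᵢ(X,Y)Z,W⟩). Consequently, R(φX,φY,φZ,φW) − f₄R₄(φX,φY,φZ,φW) − f₅R₅(φX,φY,φZ,φW) = R(X,Y,Z,W) − f₄R₄(X,Y,Z,W) − f₅R₅(X,Y,Z,W). -/
open RealInnerProductSpace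

variable {V : Type*} [NormedAddCommGroup V] [InnerProductSpace ℝ V]

/-- R₁(X,Y)Z = ⟨Y,Z⟩X − ⟨X,Z⟩Y -/
noncomputable def R1 (X Y Z : V) : V := ⟪Y, Z⟫ • X - ⟪X, Z⟫ • Y

/-- R₂(X,Y)Z = ⟨X,φZ⟩φY − ⟨Y,φZ⟩φX + 2⟨X,φY⟩φZ -/
noncomputable def R2 (φ : V →ₗ[ℝ] V) (X Y Z : V) : V :=
  ⟪X, φ Z⟫ • φ Y - ⟪Y, φ Z⟫ • φ X + (2 * ⟪X, φ Y⟫) • φ Z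

/-- R₃(X,Y)Z = η(X)η(Z)Y − η(Y)η(Z)X + ⟨X,Z⟩η(Y)ξ − ⟨Y,Z⟩η(X)ξ, where η(X) = ⟨X,ξ⟩ -/
noncomputable def R3 (ξ : V) (X Y Z : V) : V :=
  (⟪X, ξ⟫ * ⟪Z, ξ⟫) • Y - (⟪Y, ξ⟫ * ⟪Z, ξ⟫) • X
    + (⟪X, Z⟫ * ⟪Y, ξ⟫) • ξ - (⟪Y, Z⟫ * ⟪X, ξ⟫) • ξ

/-- R₄(X,Y)Z = ⟨Y,Z⟩hX − ⟨X,Z⟩hY + ⟨hY,Z⟩X − ⟨hX,Z⟩Y -/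
noncomputable def R4 (h : V →ₗ[ℝ] V) (X Y Z : V) : V :=
  ⟪Y, Z⟫ • h X - ⟪X, Z⟫ • h Y + ⟪h Y, Z⟫ • X - ⟪h X, Z⟫ • Y

/-- R₅(X,Y)Z = ⟨hY,Z⟩hX − ⟨hX,Z⟩hY + ⟨φhX,Z⟩φhY − ⟨φhY,Z⟩φhX -/
noncomputable def R5 (φ h : V →ₗ[ℝ] V) (X Y Z : V) : V :=
  ⟪h Y, Z⟫ • h X - ⟪h X, Z⟫ • h Y
    + ⟪φ (h X), Z⟫ • φ (h Y) - ⟪φ (h Y), Z⟫ • φ (h X)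

/-- R₆(X,Y)Z = η(X)η(Z)hY − η(Y)η(Z)hX + ⟨hX,Z⟩η(Y)ξ − ⟨hY,Z⟩η(X)ξ -/
noncomputable def R6 (ξ : V) (h : V →ₗ[ℝ] V) (X Y Z : V) : V :=
  (⟪X, ξ⟫ * ⟪Z, ξ⟫) • h Y - (⟪Y, ξ⟫ * ⟪Z, ξ⟫) • h X
    + (⟪h X, Z⟫ * ⟪Y, ξ⟫) • ξ - (⟪h Y, Z⟫ * ⟪X, ξ⟫) • ξ

/-- R = f₁R₁ + f₂R₂ + f₃R₃ + f₄R₄ + f₅R₅ + f₆R₆ -/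
noncomputable def Rc (φ h : V →ₗ[ℝ] V) (ξ : V) (f₁ f₂ f₃ f₄ f₅ f₆ : ℝ) (X Y Z : V) : V :=
  f₁ • R1 X Y Z + f₂ • R2 φ X Y Z + f₃ • R3 ξ X Y Z + f₄ • R4 h X Y Z
    + f₅ • R5 φ h X Y Z + f₆ • R6 ξ h X Y Z

/-- R(X,Y,Z,W) = ⟨R(X,Y)Z, W⟩ -/
noncomputable def Rq (φ h : V →ₗ[ℝ] V) (ξ : V) (f₁ f₂ f₃ f₄ f₅ f₆ : ℝ) (X Y Z W : V) : ℝ :=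
  ⟪Rc φ h ξ f₁ f₂ f₃ f₄ f₅ f₆ X Y Z, W⟫

theorem stmt5 {V : Type*} [NormedAddCommGroup V] [InnerProductSpace ℝ V]
    (φ h : V →ₗ[ℝ] V) (ξ : V) (f₁ f₂ f₃ f₄ f₅ f₆ : ℝ)
    (hξ : ‖ξ‖ = 1)
    (hφ2 : ∀ X : V, φ (φ X) = -X + ⟪X, ξ⟫ • ξ)
    (hmet : ∀ X Y : V, ⟪φ X, φ Y⟫ = ⟪X, Y⟫ - ⟪X, ξ⟫ * ⟪Y, ξ⟫)
    (hsym : ∀ X Y : V, ⟪h X, Y⟫ = ⟪X, h Y⟫)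
    (hhξ : h ξ = 0) :
    ∀ X Y Z W : V, ⟪X, ξ⟫ = 0 → ⟪Y, ξ⟫ = 0 → ⟪Z, ξ⟫ = 0 → ⟪W, ξ⟫ = 0 →
      ⟪R1 (φ X) (φ Y) (φ Z), φ W⟫ = ⟪R1 X Y Z, W⟫ ∧
      ⟪R2 φ (φ X) (φ Y) (φ Z), φ W⟫ = ⟪R2 φ X Y Z, W⟫ ∧
      ⟪R3 ξ (φ X) (φ Y) (φ Z), φ W⟫ = ⟪R3 ξ X Y Z, W⟫ ∧
      ⟪R6 ξ h (φ X) (φ Y) (φ Z), φ W⟫ = ⟪R6 ξ h X Y Z, W⟫ ∧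
      Rq φ h ξ f₁ f₂ f₃ f₄ f₅ f₆ (φ X) (φ Y) (φ Z) (φ W)
          - f₄ * ⟪R4 h (φ X) (φ Y) (φ Z), φ W⟫
          - f₅ * ⟪R5 φ h (φ X) (φ Y) (φ Z), φ W⟫ =
        Rq φ h ξ f₁ f₂ f₃ f₄ f₅ f₆ X Y Z W
          - f₄ * ⟪R4 h X Y Z, W⟫ - f₅ * ⟪R5 φ h X Y Z, W⟫ := by
  have hφξ : φ ξ = 0 := by
    have h1 := hmet ξ ξ
    rw [real_inner_self_eq_norm_sq ξ, hξ] at h1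
    norm_num at h1
    exact h1
  have hξ0 : ξ ≠ 0 := by
    intro h0
    rw [h0, norm_zero] at hξ
    exact zero_ne_one hξ
  have hη : ∀ X : V, ⟪φ X, ξ⟫ = 0 := by
    intro X
    have h1 := hφ2 (φ X)
    rw [hφ2 X, map_add, map_neg, map_smul, hφξ, smul_zero, add_zero] at h1
    have h2 : ⟪φ X, ξ⟫ • ξ = 0 := by
      simpa using h1
    exact (smul_eq_zero.mp h2).resolve_right hξ0
  intro X Y Z W hX hY hZ hW
  have e1 : ⟪R1 (φ X) (φ Y) (φ Z), φ W⟫ = ⟪R1 X Y Z, W⟫ := by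
    simp only [R1, inner_sub_left, real_inner_smul_left, hmet, hX, hY, hZ, hW]
    ring
  have e2 : ⟪R2 φ (φ X) (φ Y) (φ Z), φ W⟫ = ⟪R2 φ X Y Z, W⟫ := by
    simp only [R2, inner_sub_left, inner_add_left, real_inner_smul_left, hmet, hη, hX, hY, hZ, hW]
    ring
  have e3 : ⟪R3 ξ (φ X) (φ Y) (φ Z), φ W⟫ = ⟪R3 ξ X Y Z, W⟫ := by
    simp [R3, hη, hX, hY]
  have e6 : ⟪R6 ξ h (φ X) (φ Y) (φ Z), φ W⟫ = ⟪R6 ξ h X Y Z, W⟫ := by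
    simp [R6, hη, hX, hY]
  refine ⟨e1, e2, e3, e6, ?_⟩
  simp only [Rq, Rc, inner_add_left, real_inner_smul_left, e1, e2, e3, e6]
  ring
end

section
/- Assume in addition the contact metric algebraic relation h∘φ = −φ∘h. Then for all X, Y, Z, W ∈ V orthogonal to ξ: R₄(φX,φY,φZ,φW) = −R₄(X,Y,Z,W), R₅(φX,φY,φZ,φW) = R₅(X,Y,Z,W), and therefore R(φX,φY,φZ,φW) = R(X,Y,Z,W) − 2f₄·R₄(X,Y,Z,W). -/
open RealInnerProductSpace

variable {V : Type*} [NormedAddCommGroup V] [InnerProductSpace ℝ V]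

theorem stmt6 {V : Type*} [NormedAddCommGroup V] [InnerProductSpace ℝ V]
    (φ h : V →ₗ[ℝ] V) (ξ : V) (f₁ f₂ f₃ f₄ f₅ f₆ : ℝ)
    (hξ : ‖ξ‖ = 1)
    (hφ2 : ∀ X : V, φ (φ X) = -X + ⟪X, ξ⟫ • ξ)
    (hmet : ∀ X Y : V, ⟪φ X, φ Y⟫ = ⟪X, Y⟫ - ⟪X, ξ⟫ * ⟪Y, ξ⟫)
    (hsym : ∀ X Y : V, ⟪h X, Y⟫ = ⟪X, h Y⟫)
    (hhξ : h ξ = 0)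
    (hanti : ∀ X : V, h (φ X) = -φ (h X)) :
    ∀ X Y Z W : V, ⟪X, ξ⟫ = 0 → ⟪Y, ξ⟫ = 0 → ⟪Z, ξ⟫ = 0 → ⟪W, ξ⟫ = 0 →
      ⟪R4 h (φ X) (φ Y) (φ Z), φ W⟫ = -⟪R4 h X Y Z, W⟫ ∧
      ⟪R5 φ h (φ X) (φ Y) (φ Z), φ W⟫ = ⟪R5 φ h X Y Z, W⟫ ∧
      Rq φ h ξ f₁ f₂ f₃ f₄ f₅ f₆ (φ X) (φ Y) (φ Z) (φ W) =
        Rq φ h ξ f₁ f₂ f₃ f₄ f₅ f₆ X Y Z W - 2 * f₄ * ⟪R4 h X Y Z, W⟫ := by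
  have h1 : ⟪ξ, ξ⟫ = 1 := by rw [real_inner_self_eq_norm_sq, hξ]; norm_num
  have hφξ : φ ξ = 0 := by
    have := hmet ξ ξ
    rw [h1] at this
    exact inner_self_eq_zero (𝕜 := ℝ).1 (by rw [this]; norm_num)
  have hη : ∀ X : V, ⟪φ X, ξ⟫ = 0 := by
    intro X
    have e := hφ2 (φ X)
    rw [hφ2 X] at e
    simp only [map_add, map_neg, map_smul, hφξ, smul_zero, add_zero] at e
    have e2 : ⟪φ X, ξ⟫ • ξ = 0 := by simpa using e
    have e3 := congrArg (fun v => ⟪v, ξ⟫) e2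
    simpa only [real_inner_smul_left, h1, mul_one, inner_zero_left] using e3
  have hηh : ∀ X : V, ⟪h X, ξ⟫ = 0 := by
    intro X; rw [hsym, hhξ, inner_zero_right]
  intro X Y Z W hX hY hZ hW
  have a4 : ⟪R4 h (φ X) (φ Y) (φ Z), φ W⟫ = -⟪R4 h X Y Z, W⟫ := by
    simp only [R4, inner_add_left, inner_sub_left, real_inner_smul_left, hanti, inner_neg_left,
      hmet, hX, hY, hZ, hW, hηh]
    ring
  have a5 : ⟪R5 φ h (φ X) (φ Y) (φ Z), φ W⟫ = ⟪R5 φ h X Y Z, W⟫ := by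
    simp only [R5, inner_add_left, inner_sub_left, real_inner_smul_left, hanti, inner_neg_left,
      map_neg, hmet, hη, hX, hY, hZ, hW, hηh]
    ring
  refine ⟨a4, a5, ?_⟩
  have a1 : ⟪R1 (φ X) (φ Y) (φ Z), φ W⟫ = ⟪R1 X Y Z, W⟫ := by
    simp only [R1, inner_sub_left, real_inner_smul_left, hmet, hX, hY, hZ, hW]
    ring
  have a2 : ⟪R2 φ (φ X) (φ Y) (φ Z), φ W⟫ = ⟪R2 φ X Y Z, W⟫ := by
    simp only [R2, inner_add_left, inner_sub_left, real_inner_smul_left, hmet, hη, hX, hY, hZ, hW]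
    ring
  have a3 : ⟪R3 ξ (φ X) (φ Y) (φ Z), φ W⟫ = ⟪R3 ξ X Y Z, W⟫ := by
    simp [R3, hη, hX, hY]
  have a6 : ⟪R6 ξ h (φ X) (φ Y) (φ Z), φ W⟫ = ⟪R6 ξ h X Y Z, W⟫ := by
    simp [R6, hη, hX, hY]
  simp only [Rq, Rc, inner_add_left, real_inner_smul_left, a1, a2, a3, a4, a5, a6]
  ring
end

section
/- For all X, Y, Z, W ∈ V orthogonal to ξ one has R(X,Y,Z,φW) + R(X,Y,φZ,W) = −(f₁−f₂)·P(X,Y,Z,W) − f₄·(P(hX,Y,Z,W) + P(X,hY,Z,W)) − 2f₅·P(hX,hY,Z,W). -/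
open RealInnerProductSpace

variable {V : Type*} [NormedAddCommGroup V] [InnerProductSpace ℝ V]

/-- P(X,Y,Z,W) = ⟨X,φZ⟩⟨Y,W⟩ − ⟨X,φW⟩⟨Y,Z⟩ − ⟨Y,φZ⟩⟨X,W⟩ + ⟨Y,φW⟩⟨X,Z⟩ -/
noncomputable def Pq (φ : V →ₗ[ℝ] V) (X Y Z W : V) : ℝ :=
  ⟪X, φ Z⟫ * ⟪Y, W⟫ - ⟪X, φ W⟫ * ⟪Y, Z⟫
    - ⟪Y, φ Z⟫ * ⟪X, W⟫ + ⟪Y, φ W⟫ * ⟪X, Z⟫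

theorem stmt7 {V : Type*} [NormedAddCommGroup V] [InnerProductSpace ℝ V]
    (φ h : V →ₗ[ℝ] V) (ξ : V) (f₁ f₂ f₃ f₄ f₅ f₆ : ℝ)
    (hξ : ‖ξ‖ = 1)
    (hφ2 : ∀ X : V, φ (φ X) = -X + ⟪X, ξ⟫ • ξ)
    (hmet : ∀ X Y : V, ⟪φ X, φ Y⟫ = ⟪X, Y⟫ - ⟪X, ξ⟫ * ⟪Y, ξ⟫)
    (hsym : ∀ X Y : V, ⟪h X, Y⟫ = ⟪X, h Y⟫)
    (hhξ : h ξ = 0) :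
    ∀ X Y Z W : V, ⟪X, ξ⟫ = 0 → ⟪Y, ξ⟫ = 0 → ⟪Z, ξ⟫ = 0 → ⟪W, ξ⟫ = 0 →
      Rq φ h ξ f₁ f₂ f₃ f₄ f₅ f₆ X Y Z (φ W) + Rq φ h ξ f₁ f₂ f₃ f₄ f₅ f₆ X Y (φ Z) W =
        -((f₁ - f₂) * Pq φ X Y Z W)
          - f₄ * (Pq φ (h X) Y Z W + Pq φ X (h Y) Z W)
          - 2 * f₅ * Pq φ (h X) (h Y) Z W := by
  have hξξ : ⟪ξ, ξ⟫ = (1 : ℝ) := by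
    rw [real_inner_self_eq_norm_sq, hξ]; norm_num
  have hξ0 : ξ ≠ 0 := by
    intro h0
    rw [h0] at hξ
    simp at hξ
  have hφξ : φ ξ = 0 := by
    have h1 := hmet ξ ξ
    rw [hξξ] at h1
    have h2 : ⟪φ ξ, φ ξ⟫ = (0 : ℝ) := by rw [h1]; norm_num
    exact inner_self_eq_zero.mp h2
  have hηφ : ∀ X : V, ⟪φ X, ξ⟫ = (0 : ℝ) := by
    intro X
    have h1 := hφ2 (φ X)
    rw [hφ2 X, map_add, map_neg, map_smul, hφξ, smul_zero] at h1
    have h2 : ⟪φ X, ξ⟫ • ξ = 0 := (add_left_cancel h1).symm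
    exact (smul_eq_zero.mp h2).resolve_right hξ0
  have hskew : ∀ X Y : V, ⟪φ X, Y⟫ = -(⟪X, φ Y⟫ : ℝ) := by
    intro X Y
    have h1 := hmet X (φ Y)
    rw [hφ2 Y, inner_add_right, inner_neg_right, inner_smul_right, hηφ X, hηφ Y] at h1
    linarith
  have hηh : ∀ X : V, ⟪h X, ξ⟫ = (0 : ℝ) := by
    intro X
    rw [hsym, hhξ, inner_zero_right]
  intro X Y Z W hX hY hZ hW
  have hξφ : ∀ X : V, ⟪ξ, φ X⟫ = (0 : ℝ) := fun X => by rw [real_inner_comm, hηφ]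
  have hξW : ⟪ξ, W⟫ = (0 : ℝ) := by rw [real_inner_comm, hW]
  simp only [Rq, Rc, R1, R2, R3, R4, R5, R6, Pq, inner_add_left, inner_sub_left,
    real_inner_smul_left, hφ2, hmet, hX, hY, hZ, hW, hηφ, hηh, hξφ, hξW, hskew,
    inner_add_right, inner_neg_right, inner_neg_left, inner_smul_right,
    zero_smul, add_zero]
  ring
end

section
/- Assume in addition the contact metric algebraic relation h∘φ = −φ∘h. Then for all X, Y ∈ V orthogonal to ξ one has R(X,φX,Y,φY) = R(X,Y,X,Y) + R(X,φY,X,φY) − 2(f₁−f₂)·P(X,Y,X,φY) − 2f₄·P(X,Y,hX,φY). -/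
open RealInnerProductSpace

variable {V : Type*} [NormedAddCommGroup V] [InnerProductSpace ℝ V]

theorem stmt8 {V : Type*} [NormedAddCommGroup V] [InnerProductSpace ℝ V]
    (φ h : V →ₗ[ℝ] V) (ξ : V) (f₁ f₂ f₃ f₄ f₅ f₆ : ℝ)
    (hξ : ‖ξ‖ = 1)
    (hφ2 : ∀ X : V, φ (φ X) = -X + ⟪X, ξ⟫ • ξ)
    (hmet : ∀ X Y : V, ⟪φ X, φ Y⟫ = ⟪X, Y⟫ - ⟪X, ξ⟫ * ⟪Y, ξ⟫)
    (hsym : ∀ X Y : V, ⟪h X, Y⟫ = ⟪X, h Y⟫)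
    (hhξ : h ξ = 0)
    (hanti : ∀ X : V, h (φ X) = -φ (h X)) :
    ∀ X Y : V, ⟪X, ξ⟫ = 0 → ⟪Y, ξ⟫ = 0 →
      Rq φ h ξ f₁ f₂ f₃ f₄ f₅ f₆ X (φ X) Y (φ Y) =
        Rq φ h ξ f₁ f₂ f₃ f₄ f₅ f₆ X Y X Y
          + Rq φ h ξ f₁ f₂ f₃ f₄ f₅ f₆ X (φ Y) X (φ Y)
          - 2 * (f₁ - f₂) * Pq φ X Y X (φ Y)
          - 2 * f₄ * Pq φ X Y (h X) (φ Y) := by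
  have hξξ : ⟪ξ, ξ⟫ = 1 := by rw [real_inner_self_eq_norm_sq, hξ]; norm_num
  have hφξ : φ ξ = 0 := by
    have := hmet ξ ξ
    rw [hξξ] at this
    exact inner_self_eq_zero (𝕜 := ℝ).1 (by linarith)
  have hηφ : ∀ X : V, ⟪φ X, ξ⟫ = 0 := by
    intro X
    have h1 := hφ2 (φ X)
    rw [hφ2 X, map_add, map_neg, map_smul, hφξ, smul_zero] at h1
    have h2 : ⟪φ X, ξ⟫ • ξ = 0 := by simpa using h1
    have h3 := congrArg (fun v => ⟪v, ξ⟫) h2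
    simp only [real_inner_smul_left, hξξ, mul_one, inner_zero_left] at h3
    exact h3
  have hskew : ∀ X Y : V, ⟪φ X, Y⟫ = -⟪X, φ Y⟫ := by
    intro X Y
    have h1 := hmet X (φ Y)
    rw [hφ2 Y, inner_add_right, inner_neg_right, inner_smul_right, hηφ, hηφ] at h1
    linarith
  have hηh : ∀ X : V, ⟪h X, ξ⟫ = 0 := by
    intro X
    rw [hsym, hhξ, inner_zero_right]
  intro X Y hX hY
  have e1 : φ (φ X) = -X := by rw [hφ2, hX]; simp
  have e2 : φ (φ Y) = -Y := by rw [hφ2, hY]; simp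
  have e3 : φ (φ (h X)) = -h X := by rw [hφ2, hηh]; simp
  have e4 : φ (φ (h Y)) = -h Y := by rw [hφ2, hηh]; simp
  have a1 : ⟪φ X, X⟫ = 0 := by
    have := hskew X X
    rw [real_inner_comm X (φ X)] at this
    linarith [real_inner_comm X (φ X)]
  have a2 : ⟪X, φ X⟫ = 0 := by rw [real_inner_comm, a1]
  have a3 : ⟪φ Y, Y⟫ = 0 := by
    have := hskew Y Y
    linarith [real_inner_comm Y (φ Y)]
  have a4 : ⟪Y, φ Y⟫ = 0 := by rw [real_inner_comm, a3]
  have b1 : ⟪φ X, Y⟫ = -⟪X, φ Y⟫ := hskew X Y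
  have b2 : ⟪Y, φ X⟫ = -⟪X, φ Y⟫ := by rw [real_inner_comm, b1]
  have b3 : ⟪φ Y, X⟫ = ⟪X, φ Y⟫ := real_inner_comm _ _
  have b4 : ⟪Y, X⟫ = ⟪X, Y⟫ := real_inner_comm _ _
  have c1 : ⟪h Y, X⟫ = ⟪h X, Y⟫ := by rw [hsym, real_inner_comm]
  have c2 : ⟪X, h Y⟫ = ⟪h X, Y⟫ := (hsym _ _).symm
  have c3 : ⟪Y, h X⟫ = ⟪h X, Y⟫ := real_inner_comm _ _
  have c4 : ⟪X, h X⟫ = ⟪h X, X⟫ := real_inner_comm _ _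
  have d1 : ⟪φ (h X), Y⟫ = -⟪h X, φ Y⟫ := hskew _ _
  have d2 : ⟪φ (h Y), X⟫ = -⟪h X, φ Y⟫ := by
    have := hsym X (φ Y)
    rw [hanti, inner_neg_right, real_inner_comm] at this
    rw [real_inner_comm] at this ⊢
    linarith [real_inner_comm X (φ (h Y)), real_inner_comm (h X) (φ Y)]
  have d3 : ⟪Y, φ (h X)⟫ = -⟪h X, φ Y⟫ := by rw [real_inner_comm, d1]
  have d4 : ⟪h Y, φ Y⟫ = -⟪φ (h Y), Y⟫ := by rw [hskew]; simp
  simp only [Rq, Rc, R1, R2, R3, R4, R5, R6, Pq, inner_add_left, inner_sub_left,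
    real_inner_smul_left, hanti, map_neg, neg_neg, e1, e2, e3, e4, inner_neg_left,
    inner_neg_right, hX, hY, hηφ, hηh, hmet, a1, a2, a3, a4, b1, b2, b3, b4, c1, c2, c3, c4,
    d1, d2, d3, d4]
  ring
end

section
/- Suppose dim V = 2n+1 with n ≥ 1, that tr(h) = 0, and that f₁ − f₃ = 1. Then for any orthonormal basis (e₁, …, e₂ₙ, ξ) of V whose last vector is ξ, the Ricci curvature in the direction ξ satisfies S(ξ,ξ) := Σᵢ₌₁²ⁿ R(eᵢ,ξ,ξ,eᵢ) = 2n. (This is the key computation showing that a contact metric generalized (κ,μ)-space form with f₃ = f₁ − 1 is K-contact, hence Sasakian.) -/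
open RealInnerProductSpace

variable {V : Type*} [NormedAddCommGroup V] [InnerProductSpace ℝ V]

theorem stmt9 {V : Type*} [NormedAddCommGroup V] [InnerProductSpace ℝ V]
    [FiniteDimensional ℝ V]
    (φ h : V →ₗ[ℝ] V) (ξ : V) (f₁ f₂ f₃ f₄ f₅ f₆ : ℝ)
    (hξ : ‖ξ‖ = 1)
    (hφ2 : ∀ X : V, φ (φ X) = -X + ⟪X, ξ⟫ • ξ)
    (hmet : ∀ X Y : V, ⟪φ X, φ Y⟫ = ⟪X, Y⟫ - ⟪X, ξ⟫ * ⟪Y, ξ⟫)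
    (hsym : ∀ X Y : V, ⟪h X, Y⟫ = ⟪X, h Y⟫)
    (hhξ : h ξ = 0)
    (n : ℕ) (hn : 1 ≤ n) (hdim : Module.finrank ℝ V = 2 * n + 1)
    (htr : LinearMap.trace ℝ V h = 0)
    (hf : f₁ - f₃ = 1) :
    ∀ b : OrthonormalBasis (Fin (2 * n + 1)) ℝ V, b (Fin.last (2 * n)) = ξ →
      ∑ i : Fin (2 * n),
          Rq φ h ξ f₁ f₂ f₃ f₄ f₅ f₆ (b i.castSucc) ξ ξ (b i.castSucc) = 2 * n := by
  intro b hb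
  have hξξ : ⟪ξ, ξ⟫ = (1 : ℝ) := by rw [real_inner_self_eq_norm_sq, hξ]; norm_num
  have hφξ : φ ξ = 0 := by
    have h0 := hmet ξ ξ
    rw [hξξ] at h0
    exact inner_self_eq_zero.mp (h0.trans (by norm_num) : ⟪φ ξ, φ ξ⟫ = (0 : ℝ))
  have htr' : ∑ i : Fin (2 * n), ⟪b i.castSucc, h (b i.castSucc)⟫ = (0 : ℝ) := by
    have h1 := LinearMap.trace_eq_sum_inner h b
    rw [htr, Fin.sum_univ_castSucc, hb, hhξ, inner_zero_right, add_zero] at h1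
    exact h1.symm
  have key : ∀ i : Fin (2 * n),
      Rq φ h ξ f₁ f₂ f₃ f₄ f₅ f₆ (b i.castSucc) ξ ξ (b i.castSucc)
        = 1 + (f₄ - f₆) * ⟪b i.castSucc, h (b i.castSucc)⟫ := by
    intro i
    have h1 : ⟪b i.castSucc, b i.castSucc⟫ = (1 : ℝ) := by
      rw [real_inner_self_eq_norm_sq, b.norm_eq_one]; norm_num
    have h2 : ⟪b i.castSucc, ξ⟫ = (0 : ℝ) := by
      rw [← hb]
      exact b.inner_eq_zero (Fin.castSucc_lt_last i).ne
    have h3 : ⟪h (b i.castSucc), ξ⟫ = (0 : ℝ) := by rw [hsym, hhξ, inner_zero_right]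
    simp only [Rq, Rc, R1, R2, R3, R4, R5, R6, hφξ, hhξ, hξξ, h2, h3, map_zero,
      inner_zero_left, inner_zero_right, zero_smul, smul_zero, inner_add_left,
      inner_sub_left, real_inner_smul_left, h1, hsym]
    linear_combination hf
  rw [Finset.sum_congr rfl (fun i _ => key i), Finset.sum_add_distrib, ← Finset.mul_sum, htr']
  simp
end

section
/- Suppose dim V ≥ 3, h = 0, and R(X,Y)ξ = η(Y)X − η(X)Y for all X, Y ∈ V (the curvature identity satisfied by K-contact manifolds). Then f₃ = f₁ − 1. (This is the algebraic content of the theorem that a K-contact generalized (κ,μ)-space form satisfies f₃ = f₁ − 1.) -/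
open RealInnerProductSpace

variable {V : Type*} [NormedAddCommGroup V] [InnerProductSpace ℝ V]

theorem stmt10 {V : Type*} [NormedAddCommGroup V] [InnerProductSpace ℝ V]
    [FiniteDimensional ℝ V]
    (φ h : V →ₗ[ℝ] V) (ξ : V) (f₁ f₂ f₃ f₄ f₅ f₆ : ℝ)
    (hξ : ‖ξ‖ = 1)
    (hφ2 : ∀ X : V, φ (φ X) = -X + ⟪X, ξ⟫ • ξ)
    (hmet : ∀ X Y : V, ⟪φ X, φ Y⟫ = ⟪X, Y⟫ - ⟪X, ξ⟫ * ⟪Y, ξ⟫)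
    (hsym : ∀ X Y : V, ⟪h X, Y⟫ = ⟪X, h Y⟫)
    (hhξ : h ξ = 0)
    (hdim : 3 ≤ Module.finrank ℝ V)
    (hh0 : h = 0)
    (hK : ∀ X Y : V, Rc φ h ξ f₁ f₂ f₃ f₄ f₅ f₆ X Y ξ = ⟪Y, ξ⟫ • X - ⟪X, ξ⟫ • Y) :
    f₃ = f₁ - 1 := by
  have hφξ : φ ξ = 0 := by
    have h1 := hmet ξ ξ
    rw [real_inner_self_eq_norm_sq ξ, hξ] at h1
    have h2 : ⟪φ ξ, φ ξ⟫ = 0 := by rw [h1]; norm_num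
    exact inner_self_eq_zero.mp h2
  have hex : ∃ X : V, X ≠ 0 ∧ ⟪X, ξ⟫ = 0 := by
    by_contra hcon
    push Not at hcon
    have hle : Module.finrank ℝ V ≤ 1 := by
      apply finrank_le_one ξ
      intro w
      refine ⟨⟪w, ξ⟫, ?_⟩
      by_contra hne
      apply hcon (w - ⟪w, ξ⟫ • ξ) (fun h0 => hne (sub_eq_zero.mp h0).symm)
      rw [inner_sub_left, real_inner_smul_left, real_inner_self_eq_norm_sq, hξ]
      ring
    omega
  obtain ⟨X, hX0, hX⟩ := hex
  have hξξ : ⟪ξ, ξ⟫ = (1 : ℝ) := by rw [real_inner_self_eq_norm_sq, hξ]; norm_num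
  have hk := hK X ξ
  simp only [Rc, R1, R2, R3, R4, R5, R6, hh0, hφξ, hX, hξξ, LinearMap.zero_apply, map_zero,
    inner_zero_left, inner_zero_right, smul_zero, zero_smul, mul_zero, zero_mul, mul_one,
    one_smul, sub_zero, zero_sub, add_zero, zero_add] at hk
  have h3 : (f₁ - f₃ - 1) • X = 0 := by
    rw [sub_smul, sub_smul, one_smul, sub_eq_zero]
    rwa [smul_neg, ← sub_eq_add_neg] at hk
  rcases smul_eq_zero.mp h3 with h4 | h4
  · linarith
  · exact absurd h4 hX0
end

section
/- Let f₁, f₂, f₃, f₄, f₅, f₆ be real numbers with f₁ − f₃ < 1, and set λ = √(1 − f₁ + f₃) > 0. Suppose the following six equations hold: (1) f₁ − f₂ − f₃ − f₄ + f₆ + f₅(1 − f₁ + f₃) = 0; (2) f₁ + f₂ − f₃ + f₅(1 − f₁ + f₃) = 0; (3) 2f₂ + f₄ − f₆ = 0; (4) 2f₁ + 3f₂ − f₃ + f₄ − f₆ = 0; (5) f₅(1 − f₁ + f₃) + 2(f₄ − 1)λ + f₁ + f₄ − f₆ − 2 = 0; (6) f₅(1 − f₁ + f₃) + 2(1 −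 f₄)λ + f₁ + f₄ − f₆ − 2 = 0. Then f₁ = (f₆+1)/2, f₂ = (f₆−1)/2, f₃ = (3f₆+1)/2, f₄ = 1, f₅ = 1/2, and f₆ > −1. Consequently f₁ − f₃ = −f₆, f₄ − f₆ = 1 − f₆, and f₁ + 3f₂ = 2f₆ − 1. (This is the linear system arising in the classification of non-Sasakian contact metric generalized (κ,μ)-space forms of dimension ≥ 5.) -/
theorem stmt11 (f₁ f₂ f₃ f₄ f₅ f₆ : ℝ)
    (hlt : f₁ - f₃ < 1)
    (e1 : f₁ - f₂ - f₃ - f₄ + f₆ + f₅ * (1 - f₁ + f₃) = 0)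
    (e2 : f₁ + f₂ - f₃ + f₅ * (1 - f₁ + f₃) = 0)
    (e3 : 2 * f₂ + f₄ - f₆ = 0)
    (e4 : 2 * f₁ + 3 * f₂ - f₃ + f₄ - f₆ = 0)
    (e5 : f₅ * (1 - f₁ + f₃) + 2 * (f₄ - 1) * Real.sqrt (1 - f₁ + f₃)
            + f₁ + f₄ - f₆ - 2 = 0)
    (e6 : f₅ * (1 - f₁ + f₃) + 2 * (1 - f₄) * Real.sqrt (1 - f₁ + f₃)
            + f₁ + f₄ - f₆ - 2 = 0) :
    f₁ = (f₆ + 1) / 2 ∧ f₂ = (f₆ - 1) / 2 ∧ f₃ = (3 * f₆ + 1) / 2 ∧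
      f₄ = 1 ∧ f₅ = 1 / 2 ∧ f₆ > -1 ∧
      f₁ - f₃ = -f₆ ∧ f₄ - f₆ = 1 - f₆ ∧ f₁ + 3 * f₂ = 2 * f₆ - 1 := by
  have hs : 0 < Real.sqrt (1 - f₁ + f₃) := Real.sqrt_pos.mpr (by linarith)
  have h4 : f₄ = 1 := by
    have h : (f₄ - 1) * Real.sqrt (1 - f₁ + f₃) = 0 := by linarith
    rcases mul_eq_zero.mp h with h | h <;> linarith
  subst h4
  have h1 : f₁ = (f₆ + 1) / 2 := by linarith
  have h2 : f₂ = (f₆ - 1) / 2 := by linarith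
  have h3 : f₃ = (3 * f₆ + 1) / 2 := by linarith
  have h5 : f₅ = 1 / 2 := by
    have h : (f₅ - 1 / 2) * (1 - f₁ + f₃) = 0 := by linarith
    rcases mul_eq_zero.mp h with h | h <;> linarith
  refine ⟨h1, h2, h3, rfl, h5, ?_, ?_, rfl, ?_⟩ <;> linarith
end

section
/- Suppose dim V = 3 and the contact metric algebraic relations h∘φ = −φ∘h and tr(h) = 0 hold. Then the following tensor identities hold on V: R₅ = 0, R₄ + R₆ = 0, and R₂ = 3R₁ + 3R₃ (equivalently, −R₁ + (1/3)R₂ − R₃ = 0). (These are the identities valid for every 3-dimensional contact metric manifold used to show that the expression of the curvature tensor of a 3-dimensional generalized (κ,μ)-space form is not unique.) -/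
open RealInnerProductSpace

variable {V : Type*} [NormedAddCommGroup V] [InnerProductSpace ℝ V]

theorem aux_basis {V : Type*} [NormedAddCommGroup V] [InnerProductSpace ℝ V]
    [FiniteDimensional ℝ V] (u e f : V) (hdim : Module.finrank ℝ V = 3)
    (huu : ⟪u, u⟫ = 1) (hee : ⟪e, e⟫ = 1) (hff : ⟪f, f⟫ = 1)
    (hue : ⟪e, u⟫ = 0) (huf : ⟪f, u⟫ = 0) (hef : ⟪e, f⟫ = 0) (X : V) :
    ∃ a b c : ℝ, X = a • u + b • e + c • f := by
  have hue' : ⟪u, e⟫ = 0 := by rw [real_inner_comm]; exact hue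
  have huf' : ⟪u, f⟫ = 0 := by rw [real_inner_comm]; exact huf
  have hef' : ⟪f, e⟫ = 0 := by rw [real_inner_comm]; exact hef
  have ho : Orthonormal ℝ ![u, e, f] := by
    rw [orthonormal_iff_ite]
    intro i j
    fin_cases i <;> fin_cases j <;> simp_all
  let b := basisOfOrthonormalOfCardEqFinrank ho (by simp [hdim])
  refine ⟨b.repr X 0, b.repr X 1, b.repr X 2, ?_⟩
  have := b.sum_repr X
  simp only [b, coe_basisOfOrthonormalOfCardEqFinrank, Fin.sum_univ_three] at this
  exact this.symm

theorem aux_exists {V : Type*} [NormedAddCommGroup V] [InnerProductSpace ℝ V]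
    [FiniteDimensional ℝ V] (u : V) (hdim : Module.finrank ℝ V = 3) :
    ∃ e : V, ⟪e, e⟫ = 1 ∧ ⟪e, u⟫ = 0 := by
  have h1 := Submodule.finrank_add_finrank_orthogonal (ℝ ∙ u)
  have h2 := finrank_span_le_card (R := ℝ) ({u} : Set V)
  simp only [Set.toFinset_singleton, Finset.card_singleton] at h2
  have h3 : 0 < Module.finrank ℝ ((ℝ ∙ u)ᗮ : Submodule ℝ V) := by omega
  have : Nontrivial ((ℝ ∙ u)ᗮ : Submodule ℝ V) := Module.finrank_pos_iff.mp h3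
  obtain ⟨w, hw⟩ := exists_norm_eq ((ℝ ∙ u)ᗮ : Submodule ℝ V) (zero_le_one' ℝ)
  refine ⟨w, ?_, ?_⟩
  · rw [real_inner_self_eq_norm_sq]
    have : ‖(w : V)‖ = 1 := hw
    rw [this]; norm_num
  · exact Submodule.mem_orthogonal_singleton_iff_inner_left.mp w.2

theorem stmt12 {V : Type*} [NormedAddCommGroup V] [InnerProductSpace ℝ V]
    [FiniteDimensional ℝ V]
    (φ h : V →ₗ[ℝ] V) (ξ : V)
    (hξ : ‖ξ‖ = 1)
    (hφ2 : ∀ X : V, φ (φ X) = -X + ⟪X, ξ⟫ • ξ)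
    (hmet : ∀ X Y : V, ⟪φ X, φ Y⟫ = ⟪X, Y⟫ - ⟪X, ξ⟫ * ⟪Y, ξ⟫)
    (hsym : ∀ X Y : V, ⟪h X, Y⟫ = ⟪X, h Y⟫)
    (hhξ : h ξ = 0)
    (hdim : Module.finrank ℝ V = 3)
    (hanti : ∀ X : V, h (φ X) = -φ (h X))
    (htr : LinearMap.trace ℝ V h = 0) :
    ∀ X Y Z : V,
      R5 φ h X Y Z = 0 ∧
      R4 h X Y Z + R6 ξ h X Y Z = 0 ∧
      R2 φ X Y Z = (3 : ℝ) • R1 X Y Z + (3 : ℝ) • R3 ξ X Y Z := by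
  intro X Y Z
  have huu : ⟪ξ, ξ⟫ = 1 := by rw [real_inner_self_eq_norm_sq, hξ]; norm_num
  have hφξ : φ ξ = 0 := by
    rw [← inner_self_eq_zero (𝕜 := ℝ), hmet, huu]; norm_num
  obtain ⟨e, hee, heu⟩ := aux_exists ξ hdim
  have hφφe : φ (φ e) = -e := by rw [hφ2, heu]; simp
  have hfu : ⟪φ e, ξ⟫ = 0 := by
    have h1 := hφ2 (φ e)
    rw [hφφe, map_neg] at h1
    have h2 : ⟪φ e, ξ⟫ • ξ = 0 := by simpa using h1
    have h3 := congrArg (fun v => ⟪v, ξ⟫) h2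
    simpa only [real_inner_smul_left, huu, mul_one, inner_zero_left] using h3
  have hff : ⟪φ e, φ e⟫ = 1 := by rw [hmet, hee, heu]; norm_num
  have hef : ⟪e, φ e⟫ = 0 := by
    have h1 := hmet (φ e) e
    rw [hφφe, hfu, heu, inner_neg_left, real_inner_comm e (φ e)] at h1
    have h2 := real_inner_comm e (φ e)
    linarith
  have key := aux_basis ξ e (φ e) hdim huu hee hff heu hfu hef
  have hue : ⟪ξ, e⟫ = 0 := by rw [real_inner_comm]; exact heu
  have huf : ⟪ξ, φ e⟫ = 0 := by rw [real_inner_comm]; exact hfu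
  have hfe : ⟪φ e, e⟫ = 0 := by rw [real_inner_comm]; exact hef
  obtain ⟨r, p, q, hhe⟩ := key (h e)
  have hr : r = 0 := by
    have h1 := hsym e ξ
    rw [hhξ, hhe] at h1
    simpa only [inner_add_left, real_inner_smul_left, huu, heu, hfu, mul_one, mul_zero, add_zero,
      inner_zero_right] using h1
  subst hr
  have hhf : h (φ e) = q • e - p • φ e := by
    rw [hanti, hhe]
    simp only [map_add, map_smul, hφξ, hφφe]
    module
  obtain ⟨a, b, c, rfl⟩ := key X
  obtain ⟨a', b', c', rfl⟩ := key Y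
  obtain ⟨a'', b'', c'', rfl⟩ := key Z
  refine ⟨?_, ?_, ?_⟩
  all_goals
    simp only [R1, R2, R3, R4, R5, R6, map_add, map_sub, map_smul, map_zero, hhξ, hφξ, hhe, hhf, hφφe,
      inner_add_left, inner_add_right, inner_sub_left, inner_sub_right, inner_neg_left,
      inner_neg_right, real_inner_smul_left, real_inner_smul_right, inner_zero_left,
      inner_zero_right, huu, hee, hff, heu, hue, hfu, huf, hef, hfe]
    module
end

section
/- Suppose dim V = 3 and the contact metric algebraic relations h∘φ = −φ∘h and tr(h) = 0 hold. Then the curvature tensor R = f₁R₁ + f₂R₂ + f₃R₃ + f₄R₄ + f₅R₅ + f₆R₆ can be rewritten as R = (f₁ + 3f₂)R₁ + (3f₂ + f₃)R₃ + (f₄ − f₆)R₄. -/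
open RealInnerProductSpace

variable {V : Type*} [NormedAddCommGroup V] [InnerProductSpace ℝ V]

theorem stmt13 {V : Type*} [NormedAddCommGroup V] [InnerProductSpace ℝ V]
    [FiniteDimensional ℝ V]
    (φ h : V →ₗ[ℝ] V) (ξ : V) (f₁ f₂ f₃ f₄ f₅ f₆ : ℝ)
    (hξ : ‖ξ‖ = 1)
    (hφ2 : ∀ X : V, φ (φ X) = -X + ⟪X, ξ⟫ • ξ)
    (hmet : ∀ X Y : V, ⟪φ X, φ Y⟫ = ⟪X, Y⟫ - ⟪X, ξ⟫ * ⟪Y, ξ⟫)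
    (hsym : ∀ X Y : V, ⟪h X, Y⟫ = ⟪X, h Y⟫)
    (hhξ : h ξ = 0)
    (hdim : Module.finrank ℝ V = 3)
    (hanti : ∀ X : V, h (φ X) = -φ (h X))
    (htr : LinearMap.trace ℝ V h = 0) :
    ∀ X Y Z : V,
      Rc φ h ξ f₁ f₂ f₃ f₄ f₅ f₆ X Y Z =
        (f₁ + 3 * f₂) • R1 X Y Z + (3 * f₂ + f₃) • R3 ξ X Y Z
          + (f₄ - f₆) • R4 h X Y Z := by
  have hξξ : ⟪ξ, ξ⟫ = (1:ℝ) := by rw [real_inner_self_eq_norm_sq, hξ]; norm_num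
  have hφξ : φ ξ = 0 := by
    have h1 := hmet ξ ξ
    rw [hξξ] at h1
    exact inner_self_eq_zero (𝕜 := ℝ).mp (by rw [h1]; norm_num)
  obtain ⟨e, he, heξ⟩ : ∃ e : V, ⟪e, e⟫ = (1:ℝ) ∧ ⟪e, ξ⟫ = (0:ℝ) := by
    have hne : (ℝ ∙ ξ)ᗮ ≠ ⊥ := by
      intro hb
      have h1 := Submodule.finrank_add_finrank_orthogonal (ℝ ∙ ξ)
      rw [hb, finrank_bot, hdim] at h1
      have h2 := finrank_span_le_card (R := ℝ) ({ξ} : Set V)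
      simp at h2
      omega
    obtain ⟨v, hv, hv0⟩ := Submodule.exists_mem_ne_zero_of_ne_bot hne
    rw [Submodule.mem_orthogonal_singleton_iff_inner_left] at hv
    have hn : ‖v‖ ≠ 0 := norm_ne_zero_iff.mpr hv0
    refine ⟨‖v‖⁻¹ • v, ?_, ?_⟩
    · rw [real_inner_smul_left, real_inner_smul_right, real_inner_self_eq_norm_sq]
      field_simp
    · rw [real_inner_smul_left, hv, mul_zero]
  obtain ⟨f, hf⟩ : ∃ f, f = φ e := ⟨_, rfl⟩
  have hφe : φ e = f := hf.symm
  have hφf : φ f = -e := by rw [hf, hφ2, heξ]; simp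
  have hff : ⟪f, f⟫ = (1:ℝ) := by rw [hf, hmet, he, heξ]; norm_num
  have hfξ : ⟪f, ξ⟫ = (0:ℝ) := by
    have h1 := hmet f ξ
    rw [hφξ, inner_zero_right, hξξ] at h1
    have h2 := hφ2 f
    rw [hφf, map_neg, hφe] at h2
    have h3 : ⟪f, ξ⟫ • ξ = (0:V) := by
      have := congrArg (fun w => f + w) h2
      simpa using this.symm
    have h4 : ξ ≠ 0 := by rintro rfl; simp at hξ
    exact (smul_eq_zero.mp h3).resolve_right h4
  have hef : ⟪e, f⟫ = (0:ℝ) := by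
    have h1 := hmet e f
    rw [hφe, hφf, inner_neg_right, heξ, real_inner_comm] at h1
    linarith
  have hξe : ⟪ξ, e⟫ = (0:ℝ) := by rw [real_inner_comm, heξ]
  have hξf : ⟪ξ, f⟫ = (0:ℝ) := by rw [real_inner_comm, hfξ]
  have hfe : ⟪f, e⟫ = (0:ℝ) := by rw [real_inner_comm, hef]
  have hon : Orthonormal ℝ ![e, f, ξ] := by
    rw [orthonormal_iff_ite]
    intro i j
    fin_cases i <;> fin_cases j <;> simp [he, hff, hξξ, hef, hfe, heξ, hξe, hfξ, hξf,
      -inner_self_eq_norm_sq_to_K]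
  have hexp : ∀ X : V, X = ⟪e, X⟫ • e + ⟪f, X⟫ • f + ⟪ξ, X⟫ • ξ := by
    intro X
    have hsp : ⊤ ≤ Submodule.span ℝ (Set.range ![e, f, ξ]) :=
      (hon.linearIndependent.span_eq_top_of_card_eq_finrank (by simp [hdim])).ge
    have h1 := (OrthonormalBasis.mk hon hsp).sum_repr' X
    simp only [OrthonormalBasis.coe_mk, Fin.sum_univ_three] at h1
    exact h1.symm
  obtain ⟨a, b, hhe⟩ : ∃ a b : ℝ, h e = a • e + b • f := by
    refine ⟨⟪e, h e⟫, ⟪f, h e⟫, ?_⟩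
    have h1 := hexp (h e)
    rw [← hsym ξ e, hhξ, inner_zero_left, zero_smul, add_zero] at h1
    exact h1
  have hhf : h f = b • e - a • f := by
    rw [hf, hanti, hhe, map_add, map_smul, map_smul, hφf, hφe]
    module
  have key : ∀ X : V, ∃ x y z : ℝ, X = x • e + y • f + z • ξ := fun X => ⟨_, _, _, hexp X⟩
  intro X Y Z
  obtain ⟨x1, x2, x3, rfl⟩ := key X
  obtain ⟨y1, y2, y3, rfl⟩ := key Y
  obtain ⟨z1, z2, z3, rfl⟩ := key Z
  simp only [Rc, R1, R2, R3, R4, R5, R6, map_add, map_sub, map_zero, map_smul, hφe, hφf, hφξ, hhe,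
    hhf, hhξ, inner_add_left, inner_add_right, inner_sub_left, inner_sub_right, inner_neg_left,
    inner_neg_right, real_inner_smul_left, real_inner_smul_right, inner_zero_left,
    inner_zero_right, he, hff, hξξ, hef, hfe, heξ, hξe, hfξ, hξf]
  module
end

section
/- Suppose dim V = 3 and the contact metric algebraic relations h∘φ = −φ∘h and tr(h) = 0 hold, and suppose there exists a unit vector X orthogonal to ξ with hX = λX for some λ ≠ 0. If two families of coefficients give the same curvature tensor, i.e. f₁R₁ + f₂R₂ + f₃R₃ + f₄R₄ + f₅R₅ + f₆R₆ = f₁*R₁ + f₂*R₂ + f₃*R₃ + f₄*R₄ + f₅*R₅ + f₆*R₆ as tensors on V, then f₁* − f₁ = f₃* − f₃, f₂* − f₂ = −(f₁* − f₁)/3, and f₄* − f₄ = f₆* − f₆. (Thus the writing of the curvature tensor of a 3-dimensional contact metric generalized (κ,μ)-space form is unique only up to these relations.) -/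
open RealInnerProductSpace

variable {V : Type*} [NormedAddCommGroup V] [InnerProductSpace ℝ V]

theorem stmt14 {V : Type*} [NormedAddCommGroup V] [InnerProductSpace ℝ V]
    [FiniteDimensional ℝ V]
    (φ h : V →ₗ[ℝ] V) (ξ : V)
    (f₁ f₂ f₃ f₄ f₅ f₆ g₁ g₂ g₃ g₄ g₅ g₆ : ℝ)
    (hξ : ‖ξ‖ = 1)
    (hφ2 : ∀ X : V, φ (φ X) = -X + ⟪X, ξ⟫ • ξ)
    (hmet : ∀ X Y : V, ⟪φ X, φ Y⟫ = ⟪X, Y⟫ - ⟪X, ξ⟫ * ⟪Y, ξ⟫)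
    (hsym : ∀ X Y : V, ⟪h X, Y⟫ = ⟪X, h Y⟫)
    (hhξ : h ξ = 0)
    (hdim : Module.finrank ℝ V = 3)
    (hanti : ∀ X : V, h (φ X) = -φ (h X))
    (htr : LinearMap.trace ℝ V h = 0)
    (X : V) (lam : ℝ) (hX1 : ‖X‖ = 1) (hXξ : ⟪X, ξ⟫ = 0)
    (hhX : h X = lam • X) (hlam : lam ≠ 0)
    (heq : ∀ A B C : V,
      Rc φ h ξ f₁ f₂ f₃ f₄ f₅ f₆ A B C = Rc φ h ξ g₁ g₂ g₃ g₄ g₅ g₆ A B C) :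
    g₁ - f₁ = g₃ - f₃ ∧ g₂ - f₂ = -(g₁ - f₁) / 3 ∧ g₄ - f₄ = g₆ - f₆ := by
  have hξξ : ⟪ξ, ξ⟫ = 1 := by rw [real_inner_self_eq_norm_sq, hξ]; norm_num
  have hXX : ⟪X, X⟫ = 1 := by rw [real_inner_self_eq_norm_sq, hX1]; norm_num
  have hξX : ⟪ξ, X⟫ = 0 := by rw [real_inner_comm]; exact hXξ
  have hφξ : φ ξ = 0 := by
    have := hmet ξ ξ
    rw [hξξ] at this
    exact inner_self_eq_zero.mp (by rw [this]; norm_num : ⟪φ ξ, φ ξ⟫ = 0)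
  have hξ0 : ξ ≠ 0 := by
    intro h0
    rw [h0] at hξ
    simp at hξ
  have hφφ : φ (φ X) = -X := by rw [hφ2, hXξ]; simp
  have hYξ : ⟪φ X, ξ⟫ = 0 := by
    have h1 := hφ2 (φ X)
    rw [hφφ, map_neg] at h1
    have h2 : ⟪φ X, ξ⟫ • ξ = 0 := by simpa using h1
    exact (smul_eq_zero.mp h2).resolve_right hξ0
  have hξY : ⟪ξ, φ X⟫ = 0 := by rw [real_inner_comm]; exact hYξ
  have hXY : ⟪X, φ X⟫ = 0 := by
    have h1 := hmet X (φ X)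
    rw [hφφ, hXξ, inner_neg_right, real_inner_comm] at h1
    linarith
  have hYX : ⟪φ X, X⟫ = 0 := by rw [real_inner_comm]; exact hXY
  have hYY : ⟪φ X, φ X⟫ = 1 := by rw [hmet, hXX, hXξ]; norm_num
  have hhY : h (φ X) = -(lam • φ X) := by rw [hanti, hhX, map_smul]
  have e1 := congrArg (fun v => ⟪v, X⟫) (heq X ξ ξ)
  have e2 := congrArg (fun v => ⟪v, φ X⟫) (heq (φ X) ξ ξ)
  have e3 := congrArg (fun v => ⟪v, X⟫) (heq X (φ X) (φ X))
  simp only [Rc, R1, R2, R3, R4, R5, R6, hhX, hhY, hhξ, hφξ, hφφ, map_smul, map_neg, map_zero,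
    inner_add_left, inner_sub_left, inner_neg_left, inner_neg_right, real_inner_smul_left,
    inner_zero_left, inner_zero_right, hξξ, hXX, hξX, hXξ, hYξ, hξY, hXY, hYX, hYY] at e1 e2 e3
  have h46 : lam * ((g₄ - f₄) - (g₆ - f₆)) = 0 := by linarith
  have h46' := (mul_eq_zero.mp h46).resolve_left hlam
  refine ⟨by linarith, by linarith, by linarith⟩
end

section
/- Suppose dim V = 2n+1 with n ≥ 1 and the contact metric algebraic relations h∘φ = −φ∘h and tr(h) = 0 hold. Define the Ricci operator Q : V → V by ⟨QX, Y⟩ = Σₐ R(eₐ, X, Y, eₐ) for any orthonormal basis (eₐ) of V. Then QX = (2nf₁ + 3f₂ − f₃)X − (3f₂ + (2n−1)f₃)η(X)ξ + ((2n−1)f₄ − f₆)hX for all X ∈ V; i.e. Q = (2nf₁ + 3f₂ − f₃)·Id − (3f₂ + (2n−1)f₃)·η⊗ξ + ((2n−1)f₄ − f₆)·h. -/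
open RealInnerProductSpace

variable {V : Type*} [NormedAddCommGroup V] [InnerProductSpace ℝ V]

theorem stmt15 {V : Type*} [NormedAddCommGroup V] [InnerProductSpace ℝ V]
    [FiniteDimensional ℝ V]
    (φ h : V →ₗ[ℝ] V) (ξ : V) (f₁ f₂ f₃ f₄ f₅ f₆ : ℝ)
    (hξ : ‖ξ‖ = 1)
    (hφ2 : ∀ X : V, φ (φ X) = -X + ⟪X, ξ⟫ • ξ)
    (hmet : ∀ X Y : V, ⟪φ X, φ Y⟫ = ⟪X, Y⟫ - ⟪X, ξ⟫ * ⟪Y, ξ⟫)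
    (hsym : ∀ X Y : V, ⟪h X, Y⟫ = ⟪X, h Y⟫)
    (hhξ : h ξ = 0)
    (n : ℕ) (hn : 1 ≤ n) (hdim : Module.finrank ℝ V = 2 * n + 1)
    (hanti : ∀ X : V, h (φ X) = -φ (h X))
    (htr : LinearMap.trace ℝ V h = 0)
    (Q : V →ₗ[ℝ] V)
    (hQ : ∀ (b : OrthonormalBasis (Fin (2 * n + 1)) ℝ V) (X Y : V),
      ⟪Q X, Y⟫ = ∑ a : Fin (2 * n + 1), Rq φ h ξ f₁ f₂ f₃ f₄ f₅ f₆ (b a) X Y (b a)) :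
    ∀ X : V,
      Q X = ((2 * (n : ℝ)) * f₁ + 3 * f₂ - f₃) • X
        - (3 * f₂ + (2 * (n : ℝ) - 1) * f₃) • (⟪X, ξ⟫ • ξ)
        + ((2 * (n : ℝ) - 1) * f₄ - f₆) • h X := by
  have hξξ : ⟪ξ, ξ⟫ = 1 := by
    rw [real_inner_self_eq_norm_sq, hξ]; norm_num
  have hφξ : φ ξ = 0 := by
    have h1 := hmet ξ ξ
    rw [hξξ] at h1
    have h2 : ⟪φ ξ, φ ξ⟫ = 0 := by rw [h1]; norm_num
    exact inner_self_eq_zero.mp h2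
  have hηφ : ∀ X : V, ⟪φ X, ξ⟫ = 0 := by
    intro X
    have h1 := hφ2 (φ X)
    rw [hφ2 X, map_add, map_neg, map_smul, hφξ, smul_zero] at h1
    have h2 : ⟪φ X, ξ⟫ • ξ = 0 := by
      have h3 := add_left_cancel h1
      exact h3.symm
    rcases smul_eq_zero.mp h2 with h3 | h3
    · exact h3
    · rw [h3] at hξ; simp at hξ
  have hskew : ∀ X Y : V, ⟪φ X, Y⟫ = -⟪X, φ Y⟫ := by
    intro X Y
    have h1 := hmet (φ X) Y
    have h2 : ⟪ξ, φ Y⟫ = 0 := by rw [real_inner_comm, hηφ]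
    rw [hφ2, inner_add_left, inner_neg_left, real_inner_smul_left, hηφ, h2] at h1
    linarith
  have hηh : ∀ X : V, ⟪h X, ξ⟫ = 0 := by
    intro X
    rw [hsym, hhξ, inner_zero_right]
  intro X
  refine ext_inner_right ℝ fun Y => ?_
  let b : OrthonormalBasis (Fin (2 * n + 1)) ℝ V :=
    (stdOrthonormalBasis ℝ V).reindex (finCongr hdim)
  have hP : ∀ u v : V, ∑ a, ⟪u, b a⟫ * ⟪b a, v⟫ = ⟪u, v⟫ := b.sum_inner_mul_inner
  have hT : ∑ a, ⟪h (b a), b a⟫ = 0 := by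
    rw [← htr, LinearMap.trace_eq_sum_inner h b]
    exact Finset.sum_congr rfl fun a _ => real_inner_comm _ _
  have hT2 : ∑ a, ⟪φ (h (b a)), b a⟫ = 0 := by
    have h1 : LinearMap.trace ℝ V (φ ∘ₗ h) = LinearMap.trace ℝ V (h ∘ₗ φ) :=
      LinearMap.trace_comp_comm' _ _
    have h2 : h ∘ₗ φ = -(φ ∘ₗ h) := by
      ext Z; simp [hanti]
    rw [h2, map_neg] at h1
    have h3 : LinearMap.trace ℝ V (φ ∘ₗ h) = 0 := by linarith
    rw [← h3, LinearMap.trace_eq_sum_inner (φ ∘ₗ h) b]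
    exact Finset.sum_congr rfl fun a _ => real_inner_comm _ _
  have hE : ∑ a, ⟪b a, b a⟫ = 2 * (n : ℝ) + 1 := by
    simp [b.orthonormal.1]
  have hφe : ∀ Z : V, ⟪φ Z, Z⟫ = 0 := by
    intro Z
    have := hskew Z Z
    rw [real_inner_comm (φ Z) Z] at this
    linarith
  have hterm : ∀ e : V, Rq φ h ξ f₁ f₂ f₃ f₄ f₅ f₆ e X Y e =
      (f₁ * ⟪X, Y⟫ - f₃ * (⟪X, ξ⟫ * ⟪Y, ξ⟫) + f₄ * ⟪h X, Y⟫) * ⟪e, e⟫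
      + (f₄ * ⟪X, Y⟫ + f₅ * ⟪h X, Y⟫ - f₆ * (⟪X, ξ⟫ * ⟪Y, ξ⟫)) * ⟪h e, e⟫
      - f₅ * ⟪φ (h X), Y⟫ * ⟪φ (h e), e⟫
      - f₁ * (⟪X, e⟫ * ⟪e, Y⟫)
      + 3 * f₂ * (⟪φ X, e⟫ * ⟪e, φ Y⟫)
      + f₃ * ⟪Y, ξ⟫ * (⟪X, e⟫ * ⟪e, ξ⟫)
      + f₃ * ⟪X, ξ⟫ * (⟪Y, e⟫ * ⟪e, ξ⟫)
      - f₃ * ⟪X, Y⟫ * (⟪ξ, e⟫ * ⟪e, ξ⟫)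
      - f₄ * (⟪h X, e⟫ * ⟪e, Y⟫)
      - f₄ * (⟪X, e⟫ * ⟪e, h Y⟫)
      - f₅ * (⟪h X, e⟫ * ⟪e, h Y⟫)
      + f₅ * (⟪φ (h X), e⟫ * ⟪e, φ (h Y)⟫)
      + f₆ * ⟪Y, ξ⟫ * (⟪h X, e⟫ * ⟪e, ξ⟫)
      + f₆ * ⟪X, ξ⟫ * (⟪ξ, e⟫ * ⟪e, h Y⟫)
      - f₆ * ⟪h X, Y⟫ * (⟪ξ, e⟫ * ⟪e, ξ⟫) := by
    intro e
    have e1 : ⟪φ (h e), Y⟫ = ⟪e, φ (h Y)⟫ := by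
      rw [hskew, hsym, hanti, inner_neg_right, neg_neg]
    simp only [Rq, Rc, R1, R2, R3, R4, R5, R6, inner_add_left, inner_sub_left,
      real_inner_smul_left, e1, hφe, hsym e Y]
    rw [real_inner_comm e (φ X), real_inner_comm e (φ Y), real_inner_comm e ξ, real_inner_comm e Y]
    ring
  rw [hQ b X Y, Finset.sum_congr rfl fun a _ => hterm (b a)]
  simp only [Finset.sum_add_distrib, Finset.sum_sub_distrib, ← Finset.mul_sum, hP, hT, hT2, hE]
  have e2 : ⟪ξ, h Y⟫ = 0 := by rw [real_inner_comm, hηh]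
  have e3 : ⟪X, h Y⟫ = ⟪h X, Y⟫ := (hsym X Y).symm
  simp only [inner_add_left, inner_sub_left, real_inner_smul_left, hmet, hηh, hξξ, e2, e3]
  rw [real_inner_comm Y ξ]
  ring
end

section
/- Suppose dim V = 2n+1 with n ≥ 1 and the contact metric algebraic relations h∘φ = −φ∘h and tr(h) = 0 hold. Let Q : V → V be the Ricci operator defined by ⟨QX, Y⟩ = Σₐ R(eₐ, X, Y, eₐ) for any orthonormal basis (eₐ) of V. Then Q∘φ − φ∘Q = 2((2n−1)f₄ − f₆)·(h∘φ). In particular Q∘φ = φ∘Q if and only if (2n−1)f₄ − f₆ = 0 or h∘φ = 0. -/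
open RealInnerProductSpace

variable {V : Type*} [NormedAddCommGroup V] [InnerProductSpace ℝ V]

theorem stmt16 {V : Type*} [NormedAddCommGroup V] [InnerProductSpace ℝ V]
    [FiniteDimensional ℝ V]
    (φ h : V →ₗ[ℝ] V) (ξ : V) (f₁ f₂ f₃ f₄ f₅ f₆ : ℝ)
    (hξ : ‖ξ‖ = 1)
    (hφ2 : ∀ X : V, φ (φ X) = -X + ⟪X, ξ⟫ • ξ)
    (hmet : ∀ X Y : V, ⟪φ X, φ Y⟫ = ⟪X, Y⟫ - ⟪X, ξ⟫ * ⟪Y, ξ⟫)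
    (hsym : ∀ X Y : V, ⟪h X, Y⟫ = ⟪X, h Y⟫)
    (hhξ : h ξ = 0)
    (n : ℕ) (hn : 1 ≤ n) (hdim : Module.finrank ℝ V = 2 * n + 1)
    (hanti : ∀ X : V, h (φ X) = -φ (h X))
    (htr : LinearMap.trace ℝ V h = 0)
    (Q : V →ₗ[ℝ] V)
    (hQ : ∀ (b : OrthonormalBasis (Fin (2 * n + 1)) ℝ V) (X Y : V),
      ⟪Q X, Y⟫ = ∑ a : Fin (2 * n + 1), Rq φ h ξ f₁ f₂ f₃ f₄ f₅ f₆ (b a) X Y (b a)) :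
    (∀ X : V, Q (φ X) - φ (Q X) = (2 * ((2 * (n : ℝ) - 1) * f₄ - f₆)) • h (φ X)) ∧
      ((∀ X : V, Q (φ X) = φ (Q X)) ↔
        ((2 * (n : ℝ) - 1) * f₄ - f₆ = 0 ∨ ∀ X : V, h (φ X) = 0)) := by
  have hφξ : φ ξ = 0 := by
    have h1 := hmet ξ ξ
    rw [real_inner_self_eq_norm_sq ξ, hξ] at h1
    have : ⟪φ ξ, φ ξ⟫ = 0 := by rw [h1]; norm_num
    exact inner_self_eq_zero.mp this
  have hξ0 : ξ ≠ 0 := by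
    intro h0
    rw [h0, norm_zero] at hξ
    exact zero_ne_one hξ
  have hηφ : ∀ X : V, ⟪φ X, ξ⟫ = 0 := by
    intro X
    have h1 := hφ2 (φ X)
    rw [hφ2 X, map_add, map_neg, map_smul, hφξ, smul_zero] at h1
    have h2 : ⟪φ X, ξ⟫ • ξ = 0 := by simpa using h1
    exact (smul_eq_zero.mp h2).resolve_right hξ0
  have hskew : ∀ X Y : V, ⟪φ X, Y⟫ = -⟪X, φ Y⟫ := by
    intro X Y
    have h1 := hmet X (φ Y)
    rw [hφ2 Y, hηφ Y, inner_add_right, inner_neg_right, inner_smul_right, hηφ X] at h1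
    linarith
  have hηh : ∀ X : V, ⟪h X, ξ⟫ = 0 := by
    intro X
    rw [hsym, hhξ, inner_zero_right]
  have htr2 : LinearMap.trace ℝ V (φ * h) = 0 := by
    have h1 : h * φ = -(φ * h) := by
      ext X
      simpa using hanti X
    have h2 := LinearMap.trace_mul_comm ℝ φ h
    rw [h1, map_neg] at h2
    linarith
  let b : OrthonormalBasis (Fin (2 * n + 1)) ℝ V :=
    (stdOrthonormalBasis ℝ V).reindex (finCongr hdim)
  have hpars : ∀ X Y : V, ∑ a, ⟪b a, X⟫ * ⟪b a, Y⟫ = ⟪X, Y⟫ := by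
    intro X Y
    rw [← b.sum_inner_mul_inner X Y]
    exact Finset.sum_congr rfl fun a _ => by rw [real_inner_comm X]
  have hone : ∑ a, ⟪b a, b a⟫ = 2 * (n : ℝ) + 1 := by
    simp
  have hth : ∑ a, ⟪b a, h (b a)⟫ = 0 := by
    rw [← LinearMap.trace_eq_sum_inner h b, htr]
  have htφh : ∑ a, ⟪b a, φ (h (b a))⟫ = 0 := by
    rw [← htr2, LinearMap.trace_eq_sum_inner (φ * h) b]
    rfl
  have hb0 : ∀ X : V, ⟪X, φ X⟫ = 0 := by
    intro X
    have := hskew X X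
    rw [real_inner_comm] at this
    linarith
  have hform : ∀ X Y : V, ⟪Q X, Y⟫ =
      (2 * n * f₁ + 3 * f₂ - f₃) * ⟪X, Y⟫
      + (-3 * f₂ - (2 * n - 1) * f₃) * (⟪X, ξ⟫ * ⟪Y, ξ⟫)
      + ((2 * (n : ℝ) - 1) * f₄ - f₆) * ⟪h X, Y⟫ := by
    intro X Y
    rw [hQ b X Y]
    have hterm : ∀ a, Rq φ h ξ f₁ f₂ f₃ f₄ f₅ f₆ (b a) X Y (b a) =
        (f₁ * ⟪X, Y⟫ - f₃ * (⟪X, ξ⟫ * ⟪Y, ξ⟫) + f₄ * ⟪h X, Y⟫) * ⟪b a, b a⟫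
        - f₁ * (⟪b a, Y⟫ * ⟪b a, X⟫)
        + 3 * f₂ * (⟪b a, φ X⟫ * ⟪b a, φ Y⟫)
        + f₃ * ⟪Y, ξ⟫ * (⟪b a, ξ⟫ * ⟪b a, X⟫)
        + f₃ * ⟪X, ξ⟫ * (⟪b a, Y⟫ * ⟪b a, ξ⟫)
        - f₃ * ⟪X, Y⟫ * (⟪b a, ξ⟫ * ⟪b a, ξ⟫)
        + (f₄ * ⟪X, Y⟫ + f₅ * ⟪h X, Y⟫ - f₆ * (⟪X, ξ⟫ * ⟪Y, ξ⟫)) * ⟪b a, h (b a)⟫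
        - f₄ * (⟪b a, Y⟫ * ⟪b a, h X⟫)
        - f₄ * (⟪b a, h Y⟫ * ⟪b a, X⟫)
        - f₅ * (⟪b a, h Y⟫ * ⟪b a, h X⟫)
        + f₅ * (⟪b a, φ (h Y)⟫ * ⟪b a, φ (h X)⟫)
        - f₅ * ⟪φ (h X), Y⟫ * ⟪b a, φ (h (b a))⟫
        + f₆ * ⟪Y, ξ⟫ * (⟪b a, ξ⟫ * ⟪b a, h X⟫)
        + f₆ * ⟪X, ξ⟫ * (⟪b a, h Y⟫ * ⟪b a, ξ⟫)
        - f₆ * ⟪h X, Y⟫ * (⟪b a, ξ⟫ * ⟪b a, ξ⟫) := by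
      intro a
      have e1 : ⟪φ (h (b a)), Y⟫ = ⟪b a, φ (h Y)⟫ := by
        rw [hskew, hsym, hanti, inner_neg_right, neg_neg]
      have e2 : ⟪φ (b a), b a⟫ = 0 := by rw [real_inner_comm, hb0]
      simp only [Rq, Rc, R1, R2, R3, R4, R5, R6, inner_add_left, inner_sub_left,
        real_inner_smul_left, e1, e2]
      rw [hsym (b a) Y, hsym (b a) (b a)]
      simp only [real_inner_comm (b a) X, real_inner_comm (b a) (φ X),
        real_inner_comm (b a) (φ Y), real_inner_comm (b a) ξ, real_inner_comm (b a) (h X),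
        real_inner_comm (b a) (φ (h X)), real_inner_comm (b a) (φ (h (b a)))]
      ring
    rw [Finset.sum_congr rfl fun a _ => hterm a]
    simp only [Finset.sum_add_distrib, Finset.sum_sub_distrib, ← Finset.mul_sum, hpars, hone,
      hth, htφh, hmet, hηh]
    rw [real_inner_self_eq_norm_sq ξ, hξ, real_inner_comm X Y, real_inner_comm (h X) Y,
      real_inner_comm X ξ, real_inner_comm (h X) ξ, hηh, real_inner_comm (h X) (h Y), 
      hsym Y X, real_inner_comm (h X) Y]
    ring
  have hmain : ∀ X : V,
      Q (φ X) - φ (Q X) = (2 * ((2 * (n : ℝ) - 1) * f₄ - f₆)) • h (φ X) := by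
    intro X
    refine ext_inner_right ℝ fun Y => ?_
    rw [inner_sub_left, hskew (Q X) Y, hform, hform, real_inner_smul_left, hηφ, hηφ,
      hskew X Y, hanti, inner_neg_left, hskew (h X) Y]
    ring
  refine ⟨hmain, ?_, ?_⟩
  · intro hc
    by_cases hz : (2 * (n : ℝ) - 1) * f₄ - f₆ = 0
    · exact Or.inl hz
    · right
      intro X
      have h1 := hmain X
      rw [hc X, sub_self] at h1
      exact (smul_eq_zero.mp h1.symm).resolve_left (mul_ne_zero two_ne_zero hz)
  · intro hc X
    rw [← sub_eq_zero, hmain X]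
    rcases hc with hc | hc
    · rw [hc, mul_zero, zero_smul]
    · rw [hc X, smul_zero]
end

section
/- Let f₆ be a real number with f₆ > −1 and f₆ ≠ 3, and set c_s = (−5 − f₆ + 4√(f₆ + 1))/(3 − f₆). Then c_s satisfies the quadratic equation (3 − f₆)·c_s² + (10 + 2f₆)·c_s + (3 − f₆) = 0, and moreover c_s > −1 and c_s ≠ 1. (This produces, for every constant f₆ > −1, a space of constant sectional curvature c_s whose unit tangent sphere bundle, after a suitable D_a-homothetic deformation, is a (−f₆, 1−f₆)-space with constant φ-sectional curvature 2f₆ − 1.) -/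
theorem stmt18 (f₆ : ℝ) (h₁ : f₆ > -1) (h₂ : f₆ ≠ 3) :
    let cs : ℝ := (-5 - f₆ + 4 * Real.sqrt (f₆ + 1)) / (3 - f₆)
    (3 - f₆) * cs ^ 2 + (10 + 2 * f₆) * cs + (3 - f₆) = 0 ∧ cs > -1 ∧ cs ≠ 1 := by
  intro cs
  have hs : 0 < Real.sqrt (f₆ + 1) := Real.sqrt_pos.mpr (by linarith)
  have hq : Real.sqrt (f₆ + 1) ^ 2 = f₆ + 1 := Real.sq_sqrt (by linarith)
  have hne : 3 - f₆ ≠ 0 := fun h => h₂ (by linarith)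
  have hcs : cs = (Real.sqrt (f₆ + 1) - 2) / (Real.sqrt (f₆ + 1) + 2) := by
    change (-5 - f₆ + 4 * Real.sqrt (f₆ + 1)) / (3 - f₆) = _
    rw [div_eq_div_iff hne (by positivity)]
    linear_combination 4 * hq
  clear_value cs
  generalize Real.sqrt (f₆ + 1) = s at *
  have hf : f₆ = s ^ 2 - 1 := by linarith
  have hp : 0 < s + 2 := by linarith
  refine ⟨?_, ?_, ?_⟩
  · rw [hcs, hf]
    field_simp
    ring
  · rw [hcs, gt_iff_lt, lt_div_iff₀ hp]
    linarith
  · rw [hcs, ne_eq, div_eq_one_iff_eq hp.ne']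
    intro h
    linarith
end
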